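/- arXiv:2205.11851 — 2 statements merged into one kernel-verified Lean document; each statement's English description precedes it below -/
import Mathlib

section
/- Let G(·,·) be the Grundy function of one-pile maximum Nim with rule sequence f(x) = ⌈x/2⌉ and a one-time pass. For every u ≥ 1 and every integer m > 1, if G(u,0) = 2m then G(u,1) = 2m − 1. -/
/-!
Write `a t = G t 0` and `b t = G t 1`; both are mex values over the window `t / 2 ≤ j < t`, where for
`b` the pass adds the value `a t`.

Without the pass, `a` maps `{k, …, 2k}` bijectively onto `{0, …, k}` for every `k`
(`window_bijection`). By induction on `k`: the mex over this window gives `a (2k+1) = k + 1`, and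
the mex over `{k+1, …, 2k+1}`, whose values are `{0, …, k+1}` without `a k`, gives
`a (2k+2) = a k`. So moving to the next window trades `a k` for `k + 1` and `a k`.

With the pass, `b t = passPerm (a t)` for all `t ≥ 1` (`grundy_pass`), where `passPerm` is the
permutation `0 ↦ 1 ↦ 2 ↦ 0`, `2m - 1 ↔ 2m` for `m > 1`. By strong induction on `t`, the values
of `b` on the window are the images under `passPerm` of the known values of `a`, and adding the
value `a t` of the pass makes their mex equal to `passPerm (a t)`. The theorem is the case
`a t = 2m` with `m > 1`.
-/

/-- The minimum excluded value of a set of naturals. -/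
noncomputable def mex (S : Set ℕ) : ℕ := sInf {n : ℕ | n ∉ S}

theorem mex_eq {S : Set ℕ} {n : ℕ} (hn : n ∉ S) (h : ∀ i < n, i ∈ S) : mex S = n := by
  apply le_antisymm
  · exact Nat.sInf_le hn
  · by_contra hlt
    exact Nat.sInf_mem (s := {i | i ∉ S}) ⟨n, hn⟩ (h _ (not_le.mp hlt))

/-- The options of `t` are the positions `j` with `t / 2 ≤ j < t`, since
`t - ⌈t / 2⌉ = ⌊t / 2⌋`. -/
theorem options_eq (a : ℕ → ℕ) (t : ℕ) :
    {g : ℕ | ∃ v : ℕ, 1 ≤ v ∧ v ≤ (t + 1) / 2 ∧ g = a (t - v)} =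
      {g : ℕ | ∃ j : ℕ, t / 2 ≤ j ∧ j < t ∧ a j = g} := by
  ext g
  constructor
  · rintro ⟨v, h1, h2, rfl⟩
    exact ⟨t - v, by omega, by omega, rfl⟩
  · rintro ⟨j, h1, h2, rfl⟩
    exact ⟨t - j, by omega, by omega, by rw [Nat.sub_sub_self h2.le]⟩

/-- `a` maps the window `{k, …, 2k}` bijectively onto `{0, …, k}`. -/
def WindowBij (a : ℕ → ℕ) (k : ℕ) : Prop :=
  (∀ j, k ≤ j → j ≤ 2 * k → a j ≤ k) ∧
  (∀ n ≤ k, ∃ j, k ≤ j ∧ j ≤ 2 * k ∧ a j = n) ∧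
  (∀ i j, k ≤ i → i ≤ 2 * k → k ≤ j → j ≤ 2 * k → a i = a j → i = j)

section NoPass

variable {a : ℕ → ℕ} (ha : ∀ t, a t = mex {g : ℕ | ∃ j : ℕ, t / 2 ≤ j ∧ j < t ∧ a j = g})

include ha

theorem odd_value {k : ℕ} (hk : WindowBij a k) : a (2 * k + 1) = k + 1 := by
  obtain ⟨h1, h2, -⟩ := hk
  rw [ha]
  apply mex_eq
  · rintro ⟨j, hj1, hj2, hj⟩
    have := h1 j (by omega) (by omega)
    omega
  · intro n hn
    obtain ⟨j, hj1, hj2, hj⟩ := h2 n (by omega)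
    exact ⟨j, by omega, by omega, hj⟩

theorem even_value {k : ℕ} (hk : WindowBij a k) : a (2 * k + 2) = a k := by
  have ho := odd_value ha hk
  obtain ⟨h1, h2, h3⟩ := hk
  have hak := h1 k le_rfl (by omega)
  rw [ha]
  apply mex_eq
  · rintro ⟨j, hj1, hj2, hj⟩
    rcases eq_or_ne j (2 * k + 1) with rfl | hne
    · omega
    · have := h3 j k (by omega) (by omega) le_rfl (by omega) hj
      omega
  · intro n hn
    obtain ⟨j, hj1, hj2, hj⟩ := h2 n (by omega)
    have : j ≠ k := by rintro rfl; omega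
    exact ⟨j, by omega, by omega, hj⟩

theorem window_bijection (k : ℕ) : WindowBij a k := by
  induction k with
  | zero =>
    have h0 : a 0 = 0 := by
      rw [ha]
      exact mex_eq (by rintro ⟨j, -, hj, -⟩; omega) (by intro i hi; omega)
    refine ⟨?_, ?_, ?_⟩
    · intro j _ hj
      obtain rfl : j = 0 := by omega
      exact h0.le
    · intro n hn
      exact ⟨0, le_rfl, le_rfl, by omega⟩
    · intros
      omega
  | succ k ih =>
    have ho := odd_value ha ih
    have he := even_value ha ih
    obtain ⟨h1, h2, h3⟩ := ih
    have hak := h1 k le_rfl (by omega)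
    -- On the new window, `a` takes at `2k+2` the value it has at `k`, so replacing `2k+2` by `k`
    -- reduces everything but the position `2k+1` to the previous window.
    have hcase : ∀ j, k + 1 ≤ j → j ≤ 2 * (k + 1) →
        j = 2 * k + 1 ∨ j = 2 * k + 2 ∨ (k < j ∧ j ≤ 2 * k) := by
      intros
      omega
    refine ⟨?_, ?_, ?_⟩
    · intro j hj1 hj2
      rcases hcase j hj1 hj2 with rfl | rfl | ⟨h4, h5⟩
      · omega
      · omega
      · have := h1 j h4.le h5
        omega
    · intro n hn
      rcases eq_or_ne n (k + 1) with rfl | hne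
      · exact ⟨2 * k + 1, by omega, by omega, ho⟩
      · obtain ⟨j, hj1, hj2, hj⟩ := h2 n (by omega)
        rcases eq_or_ne j k with rfl | hjk
        · exact ⟨2 * j + 2, by omega, by omega, by omega⟩
        · exact ⟨j, by omega, by omega, hj⟩
    · intro i j hi1 hi2 hj1 hj2 hij
      rcases hcase i hi1 hi2 with rfl | rfl | ⟨h4, h5⟩ <;>
        rcases hcase j hj1 hj2 with rfl | rfl | ⟨h6, h7⟩
      · rfl
      · omega
      · have := h1 j h6.le h7
        omega
      · omega
      · rfl
      · have := h3 k j le_rfl (by omega) h6.le h7 (by omega)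
        omega
      · have := h1 i h4.le h5
        omega
      · have := h3 k i le_rfl (by omega) h4.le h5 (by omega)
        omega
      · exact h3 i j h4.le h5 h6.le h7 hij

end NoPass

/-- The permutation `0 ↦ 1 ↦ 2 ↦ 0`, `2m - 1 ↔ 2m` for `m > 1`, which turns the Grundy value of a
nonempty pile without the pass into the one with the pass. -/
def passPerm (n : ℕ) : ℕ :=
  if n < 2 then n + 1 else if n = 2 then 0 else if n % 2 = 1 then n + 1 else n - 1

theorem passPerm_inj {x y : ℕ} (h : passPerm x = passPerm y) : x = y := by
  unfold passPerm at h
  split_ifs at h <;> omega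

theorem passPerm_ne (x : ℕ) : passPerm x ≠ x := by
  unfold passPerm
  split_ifs <;> omega

/-- The mex for an odd pile `2k+1`: of the values below `passPerm (k+1)`, those that are not
images of `{0, …, k}` equal `k + 1`. -/
theorem passPerm_odd {k n : ℕ} (hk : 1 ≤ k) (hn : n < passPerm (k + 1)) :
    n = k + 1 ∨ ∃ x ≤ k, passPerm x = n := by
  by_cases h : n = k + 1
  · exact Or.inl h
  right
  refine ⟨if n = 0 then 2 else if n ≤ 2 then n - 1 else if n % 2 = 1 then n + 1 else n - 1, ?_, ?_⟩
  · unfold passPerm at hn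
    split_ifs at hn ⊢ <;> omega
  · unfold passPerm
    split_ifs <;> omega

/-- The mex for an even pile `2k+2`, where `c` is the value without the pass: of the values below
`passPerm c`, those that are not images of `{0, …, k+1} \ {c}` equal `c`. -/
theorem passPerm_even {k c n : ℕ} (hc : c ≤ k) (hn : n < passPerm c) :
    n = c ∨ ∃ x ≤ k + 1, x ≠ c ∧ passPerm x = n := by
  by_cases h : n = c
  · exact Or.inl h
  right
  refine ⟨if n = 0 then 2 else if n ≤ 2 then n - 1 else if n % 2 = 1 then n + 1 else n - 1,
    ?_, ?_, ?_⟩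
  · unfold passPerm at hn
    split_ifs at hn ⊢ <;> omega
  · unfold passPerm at hn
    split_ifs at hn ⊢ <;> omega
  · unfold passPerm
    split_ifs <;> omega

theorem grundy_pass {a b : ℕ → ℕ}
    (ha : ∀ t, a t = mex {g : ℕ | ∃ j : ℕ, t / 2 ≤ j ∧ j < t ∧ a j = g})
    (hb0 : b 0 = 0)
    (hb : ∀ t, 1 ≤ t → b t = mex ({g : ℕ | ∃ j : ℕ, t / 2 ≤ j ∧ j < t ∧ b j = g} ∪ {a t}))
    (t : ℕ) (ht : 1 ≤ t) : b t = passPerm (a t) := by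
  induction t using Nat.strong_induction_on with
  | _ t ih =>
    rw [hb t ht]
    obtain ⟨k, rfl | rfl⟩ : ∃ k, t = 2 * k + 1 ∨ t = 2 * k + 2 := ⟨(t - 1) / 2, by omega⟩
    · have ho := odd_value ha (window_bijection ha k)
      obtain ⟨h1, h2, -⟩ := window_bijection ha k
      rcases Nat.eq_zero_or_pos k with rfl | hk
      · -- The window of the pile `1` is `{0}`, where `b 0 = 0` is not `passPerm (a 0) = 1`.
        have hp : passPerm (a (2 * 0 + 1)) = 2 := by rw [ho]; rfl
        rw [hp, ho]
        apply mex_eq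
        · rintro (⟨j, -, hj, hj'⟩ | h)
          · obtain rfl : j = 0 := by omega
            omega
          · simp at h
        · intro i hi
          rcases Nat.eq_zero_or_pos i with rfl | hi'
          · exact Or.inl ⟨0, by omega, by omega, hb0⟩
          · exact Or.inr (by simp; omega)
      · apply mex_eq
        · rintro (⟨j, hj1, hj2, hj⟩ | h)
          · rw [ih j hj2 (by omega)] at hj
            have := h1 j (by omega) (by omega)
            have := passPerm_inj hj
            omega
          · exact passPerm_ne _ h
        · intro n hn
          rw [ho] at hn ⊢
          rcases passPerm_odd hk hn with h | ⟨x, hx, rfl⟩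
          · exact Or.inr h
          · obtain ⟨j, hj1, hj2, rfl⟩ := h2 x hx
            exact Or.inl ⟨j, by omega, by omega, ih j (by omega) (by omega)⟩
    · have he := even_value ha (window_bijection ha k)
      have hak := (window_bijection ha k).1 k le_rfl (by omega)
      obtain ⟨-, h2, h3⟩ := window_bijection ha (k + 1)
      apply mex_eq
      · rintro (⟨j, hj1, hj2, hj⟩ | h)
        · rw [ih j hj2 (by omega)] at hj
          have := h3 j (2 * k + 2) (by omega) (by omega) (by omega) (by omega) (passPerm_inj hj)
          omega
        · exact passPerm_ne _ h
      · intro n hn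
        rcases passPerm_even (he.trans_le hak) hn with h | ⟨x, hx, hxc, rfl⟩
        · exact Or.inr h
        · obtain ⟨j, hj1, hj2, rfl⟩ := h2 x hx
          have : j ≠ 2 * k + 2 := by rintro rfl; exact hxc rfl
          exact Or.inl ⟨j, by omega, by omega, ih j (by omega) (by omega)⟩

/-- One-pile maximum Nim with `f(x) = ⌈x/2⌉` and a one-time pass: if `G(u,0) = 2m` with `m > 1` (and `u ≥ 1`), then `G(u,1) = 2m - 1`. -/
theorem halfNimPass_grundy_even
    (G : ℕ → ℕ → ℕ)
    (hG0 : ∀ t : ℕ, G t 0 = mex {g : ℕ | ∃ v : ℕ, 1 ≤ v ∧ v ≤ (t + 1) / 2 ∧ g = G (t - v) 0})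
    (hG10 : G 0 1 = 0)
    (hG1 : ∀ t : ℕ, 1 ≤ t → G t 1 =
        mex ({g : ℕ | ∃ v : ℕ, 1 ≤ v ∧ v ≤ (t + 1) / 2 ∧ g = G (t - v) 1} ∪ {G t 0}))
    (u : ℕ) (hu : 1 ≤ u) (m : ℕ) (hm : 1 < m) (h : G u 0 = 2 * m) :
    G u 1 = 2 * m - 1 := by
  have key := grundy_pass (a := fun t => G t 0) (b := fun t => G t 1)
    (fun t => (hG0 t).trans (congrArg mex (options_eq (fun t => G t 0) t))) hG10
    (fun t ht => (hG1 t ht).trans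
      (congrArg (fun S => mex (S ∪ {G t 0})) (options_eq (fun t => G t 1) t))) u hu
  simp only [h] at key
  rw [key]
  unfold passPerm
  split_ifs <;> omega
end

section
/- Let G(·,·,·,·) be the Grundy function of three-pile maximum Nim with rule sequence f(x) = ⌈x/2⌉ and a one-time pass. Suppose s,t,u ∈ ℕ satisfy at least one of: s > 0 and t > 0; t > 0 and u > 0; or u > 0 and s > 0. Then for every m ∈ ℕ, if G(s,t,u,0) = 2m then G(s,t,u,1) = 2m + 1. -/
/-- The involution of `ℕ` exchanging `2m` and `2m + 1`, written so that `omega` can handle it. -/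
def twin (n : ℕ) : ℕ := n + 1 - 2 * (n % 2)

/-- `Move s t u s' t' u'`: one stone-removing move leads from `(s,t,u)` to `(s',t',u')`. A pile `x`
may shrink to any `y < x` with `x - y ≤ ⌈x/2⌉`, which is `x ≤ 2y + 1`. -/
def Move (s t u s' t' u' : ℕ) : Prop :=
  (s' < s ∧ s ≤ 2 * s' + 1 ∧ t' = t ∧ u' = u) ∨
  (t' < t ∧ t ≤ 2 * t' + 1 ∧ s' = s ∧ u' = u) ∨
  (u' < u ∧ u ≤ 2 * u' + 1 ∧ s' = s ∧ t' = t)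

/-- `F` is the Grundy function of the game without pass. -/
def IsGrundy (F : ℕ → ℕ → ℕ → ℕ) : Prop :=
  ∀ s t u, (∀ s' t' u', Move s t u s' t' u' → F s' t' u' ≠ F s t u) ∧
    ∀ k < F s t u, ∃ s' t' u', Move s t u s' t' u' ∧ F s' t' u' = k

theorem mex_notMem {S : Set ℕ} (hS : S.Finite) : mex S ∉ S :=
  Nat.sInf_mem (s := {n | n ∉ S}) hS.exists_notMem

theorem mem_of_lt_mex {S : Set ℕ} {k : ℕ} (hk : k < mex S) : k ∈ S := by
  by_contra h
  exact Nat.notMem_of_lt_sInf hk h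

/-- The option set in terms of removed amounts agrees with the one in terms of `Move`. -/
theorem options_eq_s12 (F : ℕ → ℕ → ℕ → ℕ) (s t u : ℕ) :
    {g : ℕ | (∃ v : ℕ, 1 ≤ v ∧ v ≤ (s + 1) / 2 ∧ g = F (s - v) t u) ∨
        (∃ v : ℕ, 1 ≤ v ∧ v ≤ (t + 1) / 2 ∧ g = F s (t - v) u) ∨
        (∃ v : ℕ, 1 ≤ v ∧ v ≤ (u + 1) / 2 ∧ g = F s t (u - v))} =
      {g | ∃ s' t' u', Move s t u s' t' u' ∧ F s' t' u' = g} := by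
  ext g
  simp only [Set.mem_ofPred_eq]
  constructor
  · rintro (⟨v, h1, h2, rfl⟩ | ⟨v, h1, h2, rfl⟩ | ⟨v, h1, h2, rfl⟩)
    · exact ⟨s - v, t, u, Or.inl (by omega), rfl⟩
    · exact ⟨s, t - v, u, Or.inr (Or.inl (by omega)), rfl⟩
    · exact ⟨s, t, u - v, Or.inr (Or.inr (by omega)), rfl⟩
  · rintro ⟨s', t', u', (⟨h1, h2, rfl, rfl⟩ | ⟨h1, h2, rfl, rfl⟩ | ⟨h1, h2, rfl, rfl⟩), rfl⟩
    · exact Or.inl ⟨s - s', by omega, by omega, by congr 1; omega⟩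
    · exact Or.inr (Or.inl ⟨t - t', by omega, by omega, by congr 1; omega⟩)
    · exact Or.inr (Or.inr ⟨u - u', by omega, by omega, by congr 1; omega⟩)

theorem options_finite (F : ℕ → ℕ → ℕ → ℕ) (s t u : ℕ) :
    {g | ∃ s' t' u', Move s t u s' t' u' ∧ F s' t' u' = g}.Finite := by
  refine (((Set.finite_Iic s).prod ((Set.finite_Iic t).prod (Set.finite_Iic u))).image
    fun p : ℕ × ℕ × ℕ => F p.1 p.2.1 p.2.2).subset ?_
  rintro g ⟨s', t', u', h, rfl⟩
  refine ⟨(s', t', u'), ?_, rfl⟩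
  simp only [Set.mem_prod, Set.mem_Iic]
  unfold Move at h
  omega

/-- Let `a` be the mex of the values `f i` over the options `i`, and `b` the mex of `a` together
with the values `g i`. If `g i` is the twin of `f i` at every good option, then `b = twin a`. An
option that is not good does no harm as long as `f i = twin a` and `g i ≠ twin a`. -/
theorem eq_twin_of_mex {ι : Type*} {opt good : ι → Prop} {f g : ι → ℕ} {a b : ℕ}
    (hf : ∀ i, opt i → f i ≠ a) (hf' : ∀ k < a, ∃ i, opt i ∧ f i = k)
    (hg : ∀ i, opt i → g i ≠ b) (hab : a ≠ b)
    (hg' : ∀ k < b, k = a ∨ ∃ i, opt i ∧ g i = k)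
    (hgood : ∀ i, opt i → good i → g i = twin (f i))
    (hbad : ∀ i, opt i → ¬ good i → f i = twin a ∧ g i ≠ twin a) : b = twin a := by
  unfold twin at *
  rcases lt_trichotomy b (a + 1 - 2 * (a % 2)) with h | h | h
  · -- as `b ≠ a`, the twin of `b` lies below `a`
    obtain ⟨i, hi, hfi⟩ := hf' (b + 1 - 2 * (b % 2)) (by omega)
    by_cases hgi : good i
    · have := hgood i hi hgi
      have := hg i hi
      omega
    · have := hbad i hi hgi
      omega
  · exact h
  · rcases hg' _ h with h | ⟨i, hi, hgi⟩
    · omega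
    · by_cases hi' : good i
      · have := hgood i hi hi'
        have := hf i hi
        omega
      · exact absurd hgi (hbad i hi hi').2

/-- A pile of size `1` acts as a nim-heap of size `1`. -/
theorem IsGrundy.one_third {F : ℕ → ℕ → ℕ → ℕ} (hF : IsGrundy F) (s t : ℕ) :
    F s t 1 = twin (F s t 0) := by
  induction hn : s + t using Nat.strong_induction_on generalizing s t with
  | _ n ih =>
  refine eq_twin_of_mex (ι := ℕ × ℕ) (opt := fun p => Move s t 0 p.1 p.2 0) (good := fun _ => True)
    (f := fun p => F p.1 p.2 0) (g := fun p => F p.1 p.2 1) ?_ ?_ ?_ ?_ ?_ ?_ ?_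
  · intro p hp
    exact (hF s t 0).1 _ _ _ hp
  · intro k hk
    obtain ⟨s', t', u', hm, h⟩ := (hF s t 0).2 k hk
    obtain rfl : u' = 0 := by unfold Move at hm; omega
    exact ⟨(s', t'), hm, h⟩
  · intro p hp
    exact (hF s t 1).1 _ _ _ (by unfold Move at *; omega)
  · exact (hF s t 1).1 _ _ _ (by unfold Move; omega)
  · intro k hk
    obtain ⟨s', t', u', hm, h⟩ := (hF s t 1).2 k hk
    -- the move either empties the pile of size one or leaves it alone
    by_cases hu : u' = 0
    · obtain ⟨rfl, rfl, rfl⟩ : s' = s ∧ t' = t ∧ u' = 0 := by unfold Move at hm; omega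
      exact Or.inl h.symm
    · obtain rfl : u' = 1 := by unfold Move at hm; omega
      exact Or.inr ⟨(s', t'), by unfold Move at *; omega, h⟩
  · intro p hp _
    exact ih (p.1 + p.2) (by unfold Move at hp; omega) _ _ rfl
  · intro p _ h
    exact absurd trivial h

theorem IsGrundy.one_second {F : ℕ → ℕ → ℕ → ℕ} (hF : IsGrundy F) (s u : ℕ) :
    F s 1 u = twin (F s 0 u) := by
  refine IsGrundy.one_third (F := fun a b c => F a c b) (fun a b c => ⟨?_, ?_⟩) s u
  · intro a' b' c' hm
    exact (hF a c b).1 _ _ _ (by unfold Move at *; omega)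
  · intro k hk
    obtain ⟨a', c', b', hm, h⟩ := (hF a c b).2 k hk
    exact ⟨a', b', c', by unfold Move at *; omega, h⟩

theorem IsGrundy.one_first {F : ℕ → ℕ → ℕ → ℕ} (hF : IsGrundy F) (t u : ℕ) :
    F 1 t u = twin (F 0 t u) := by
  refine IsGrundy.one_third (F := fun a b c => F c a b) (fun a b c => ⟨?_, ?_⟩) t u
  · intro a' b' c' hm
    exact (hF c a b).1 _ _ _ (by unfold Move at *; omega)
  · intro k hk
    obtain ⟨c', a', b', hm, h⟩ := (hF c a b).2 k hk
    exact ⟨a', b', c', by unfold Move at *; omega, h⟩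

/-- At least two of the three piles are nonempty. -/
def TwoNonempty (s t u : ℕ) : Prop := (0 < s ∧ 0 < t) ∨ (0 < t ∧ 0 < u) ∨ (0 < u ∧ 0 < s)

/-- A move that leaves fewer than two nonempty piles must take a whole pile of size `1`, so it
changes the no-pass value to its twin; and it cannot empty the board. -/
theorem IsGrundy.eq_twin_of_not_twoNonempty {F : ℕ → ℕ → ℕ → ℕ} (hF : IsGrundy F)
    {s t u s' t' u' : ℕ} (h2 : TwoNonempty s t u) (hm : Move s t u s' t' u')
    (h : ¬ TwoNonempty s' t' u') : F s' t' u' = twin (F s t u) ∧ 1 ≤ s' + t' + u' := by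
  have htwin : ∀ n, twin (twin n) = n := by intro n; unfold twin; omega
  unfold TwoNonempty at h2 h
  refine ⟨?_, by unfold Move at hm; omega⟩
  rcases hm with ⟨h1, h3, rfl, rfl⟩ | ⟨h1, h3, rfl, rfl⟩ | ⟨h1, h3, rfl, rfl⟩
  · obtain ⟨rfl, rfl⟩ : s = 1 ∧ s' = 0 := by omega
    rw [hF.one_first, htwin]
  · obtain ⟨rfl, rfl⟩ : t = 1 ∧ t' = 0 := by omega
    rw [hF.one_second, htwin]
  · obtain ⟨rfl, rfl⟩ : u = 1 ∧ u' = 0 := by omega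
    rw [hF.one_third, htwin]

/-- With at least two nonempty piles, the pass changes the value to its twin. Here `F` and `H` are
the Grundy functions without and with the pass available. -/
theorem pass_eq_twin {F H : ℕ → ℕ → ℕ → ℕ} (hF : IsGrundy F)
    (hH : ∀ s t u, 1 ≤ s + t + u → F s t u ≠ H s t u ∧
      (∀ s' t' u', Move s t u s' t' u' → H s' t' u' ≠ H s t u) ∧
      ∀ k < H s t u, k = F s t u ∨ ∃ s' t' u', Move s t u s' t' u' ∧ H s' t' u' = k)
    (s t u : ℕ) (h2 : TwoNonempty s t u) : H s t u = twin (F s t u) := by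
  induction hn : s + t + u using Nat.strong_induction_on generalizing s t u with
  | _ n ih =>
  obtain ⟨hne, hopt, hlt⟩ := hH s t u (by unfold TwoNonempty at h2; omega)
  refine eq_twin_of_mex (ι := ℕ × ℕ × ℕ) (opt := fun p => Move s t u p.1 p.2.1 p.2.2)
    (good := fun p => TwoNonempty p.1 p.2.1 p.2.2)
    (f := fun p => F p.1 p.2.1 p.2.2) (g := fun p => H p.1 p.2.1 p.2.2) ?_ ?_ ?_ hne ?_ ?_ ?_
  · exact fun p hp => (hF s t u).1 _ _ _ hp
  · intro k hk
    obtain ⟨s', t', u', hm⟩ := (hF s t u).2 k hk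
    exact ⟨(s', t', u'), hm⟩
  · exact fun p hp => hopt _ _ _ hp
  · intro k hk
    refine (hlt k hk).imp_right ?_
    rintro ⟨s', t', u', hm⟩
    exact ⟨(s', t', u'), hm⟩
  · intro p hp hgood
    exact ih (p.1 + p.2.1 + p.2.2) (by unfold Move at hp; omega) _ _ _ hgood rfl
  · intro p hp hbad
    obtain ⟨heq, hpos⟩ := hF.eq_twin_of_not_twoNonempty h2 hp hbad
    -- the pass from the position reached shows that its value is not `twin (F s t u)`
    exact ⟨heq, heq ▸ (hH _ _ _ hpos).1.symm⟩

/-- Theorem 5(ii.1): if at least two piles are nonempty and `G(s,t,u,0) = 2m`, then `G(s,t,u,1) = 2m + 1`. -/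
theorem threePileHalfNimPass_even
    (G : ℕ → ℕ → ℕ → ℕ → ℕ)
    (hG0 : ∀ s t u : ℕ, G s t u 0 = mex {g : ℕ |
        (∃ v : ℕ, 1 ≤ v ∧ v ≤ (s + 1) / 2 ∧ g = G (s - v) t u 0) ∨
        (∃ v : ℕ, 1 ≤ v ∧ v ≤ (t + 1) / 2 ∧ g = G s (t - v) u 0) ∨
        (∃ v : ℕ, 1 ≤ v ∧ v ≤ (u + 1) / 2 ∧ g = G s t (u - v) 0)})
    (hG10 : G 0 0 0 1 = 0)
    (hG1 : ∀ s t u : ℕ, 1 ≤ s + t + u → G s t u 1 = mex ({g : ℕ |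
        (∃ v : ℕ, 1 ≤ v ∧ v ≤ (s + 1) / 2 ∧ g = G (s - v) t u 1) ∨
        (∃ v : ℕ, 1 ≤ v ∧ v ≤ (t + 1) / 2 ∧ g = G s (t - v) u 1) ∨
        (∃ v : ℕ, 1 ≤ v ∧ v ≤ (u + 1) / 2 ∧ g = G s t (u - v) 1)} ∪ {G s t u 0}))
    (s t u : ℕ) (h2 : (0 < s ∧ 0 < t) ∨ (0 < t ∧ 0 < u) ∨ (0 < u ∧ 0 < s))
    (m : ℕ) (h : G s t u 0 = 2 * m) :
    G s t u 1 = 2 * m + 1 := by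
  have hF : IsGrundy (fun s t u => G s t u 0) := by
    intro s t u
    have hG := hG0 s t u
    rw [options_eq_s12 (fun s t u => G s t u 0)] at hG
    have hmem := mex_notMem (options_finite (fun s t u => G s t u 0) s t u)
    rw [← hG] at hmem
    exact ⟨fun s' t' u' hm he => hmem ⟨s', t', u', hm, he⟩, fun k hk =>
      mem_of_lt_mex (lt_of_lt_of_eq hk hG)⟩
  have key := pass_eq_twin (H := fun s t u => G s t u 1) hF ?_ s t u h2
  · simp only [h, twin] at key
    omega
  · intro s t u hpos
    have hG := hG1 s t u hpos
    rw [options_eq_s12 (fun s t u => G s t u 1)] at hG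
    have hmem := mex_notMem ((options_finite (fun s t u => G s t u 1) s t u).union
      (Set.finite_singleton (G s t u 0)))
    rw [← hG] at hmem
    refine ⟨fun he => hmem (Or.inr he.symm),
      fun s' t' u' hm he => hmem (Or.inl ⟨s', t', u', hm, he⟩), fun k hk => ?_⟩
    exact (mem_of_lt_mex (lt_of_lt_of_eq hk hG)).symm
end
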